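/- arXiv:1906.00154 — 2 statements merged into one kernel-verified Lean document; each statement's English description precedes it below -/
import Mathlib

section
/- Let k be a field of characteristic zero and A = ⊕_{i=0}^n A^i a finite-dimensional graded commutative k-algebra that is generated as a k-algebra by A^1, satisfies A^0 ≅ k ≅ A^n, and has Poincaré duality. Fix a k-basis a_1, ..., a_r of A^1 and a k-linear isomorphism ι: A^n → k, and let P ∈ k[x_1, ..., x_r] be the homogeneous polynomial of degree n defined by P(x_1, ..., x_r) = ι((x_1 a_1 + ... + x_r a_r)^n), i.e., P = Σ_{|α| = n} (n!/(α_1!⋯α_r!)) ι(a_1^{α_1}⋯a_r^{α_r}) x^α. Let Φ: k[t_1, ..., t_r] → A be the k-algebra homomorphism sending t_i to a_i, and let I = {f ∈ k[t_1, ..., t_r] : f(∂_1, ..., ∂_r) · P = 0}, the ideal of polynomials that annihilate P when the variables are replaced by the corresponding partial derivative operators ∂_i = ∂/∂x_i. Then ker Φ = I, and consequently Φ induces an isomorphism of graded k-algebras A ≅ k[t_1, ..., t_r]/I. -/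
open MvPolynomial

/-- A graded algebra `A = ⊕_{i=0}^n A^i` with `A^0 ≅ A^n ≅ k` has Poincaré duality
if for every `0 ≤ i ≤ n` the pairing `A^i × A^{n-i} → A^n ≅ k` is non-degenerate. -/
def PoincareDuality {k A : Type*} [Field k] [CommRing A] [Algebra k A]
    (𝒜 : ℕ → Submodule k A) (n : ℕ) : Prop :=
  ∀ i ≤ n,
    (∀ x ∈ 𝒜 i, x ≠ 0 → ∃ y ∈ 𝒜 (n - i), x * y ≠ 0) ∧
    (∀ y ∈ 𝒜 (n - i), y ≠ 0 → ∃ x ∈ 𝒜 i, x * y ≠ 0)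

/-- For `f = Σ_β c_β t^β`, the differential operator `f(∂_1, …, ∂_r)` applied to `g`:
`Σ_β c_β ∂_1^{β_1} ⋯ ∂_r^{β_r} g`. -/
noncomputable def diffOp {k : Type*} [CommRing k] {r : ℕ}
    (f g : MvPolynomial (Fin r) k) : MvPolynomial (Fin r) k :=
  ∑ β ∈ f.support,
    MvPolynomial.coeff β f •
      (List.finRange r).foldr (fun i p => (fun q => MvPolynomial.pderiv i q)^[β i] p) g

/-- The top power polynomial `P(x_1, …, x_r) = ι((x_1 a_1 + ⋯ + x_r a_r)^n)`:
expand `(x_1 a_1 + ⋯ + x_r a_r)^n` formally in `MvPolynomial (Fin r) A` and apply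
`ι : A^n ≃ k` to each coefficient (each of which lies in `A^n`, extracted via the
degree-`n` component of the decomposition). -/
noncomputable def topPowerPoly {k A : Type*} [Field k] [CommRing A] [Algebra k A]
    (𝒜 : ℕ → Submodule k A) [GradedAlgebra 𝒜] (n : ℕ) {r : ℕ}
    (a : Fin r → A) (ι : (𝒜 n) ≃ₗ[k] k) : MvPolynomial (Fin r) k :=
  ∑ α ∈ ((∑ i, MvPolynomial.X i * MvPolynomial.C (a i)) ^ n).support,
    ι (DirectSum.decompose 𝒜
        (MvPolynomial.coeff α ((∑ i, MvPolynomial.X i * MvPolynomial.C (a i)) ^ n)) n) •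
      MvPolynomial.monomial α (1 : k)

/-!
Write `a^γ` for the monomial `∏ i, a i ^ γ i`, and `∫ : A → k` for `ι` extended by zero to the
components of degree other than `n`. By the multinomial theorem the `x^γ`-coefficient of
`f(∂) P` is a divisor of `n!` times `∫ f(a) a^γ`. Hence `f(a) = 0` implies `f(∂) P = 0`.
Conversely, if `f(∂) P = 0` and `n!` is invertible, then `∫ f(a) y = 0` for every `y ∈ A`, since
the monomials `a^γ` span `A`, and Poincaré duality forces `f(a) = 0`.
-/

open scoped Nat

section Combinatorics

variable {σ : Type*} [Fintype σ]

theorem prod_ascFactorial_mul_multinomial_add (γ β : σ →₀ ℕ) :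
    (∏ i, (γ i + 1).ascFactorial (β i)) * (γ + β).multinomial =
      (γ + β).degree ! / ∏ i, (γ i)! := by
  have multinomial_spec : (∏ i, ((γ + β) i)!) * (γ + β).multinomial = (γ + β).degree ! := by
    rw [Finsupp.multinomial_eq_of_support_subset (Finset.subset_univ _), Nat.multinomial_spec,
      Finsupp.degree_eq_sum]
  have prod_ne_zero : ∏ i, (γ i)! ≠ 0 :=
    Finset.prod_ne_zero_iff.mpr fun i _ => (γ i).factorial_ne_zero
  refine Nat.eq_div_of_mul_eq_right prod_ne_zero ?_
  rw [← multinomial_spec, ← mul_assoc, ← Finset.prod_mul_distrib]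
  simp only [Nat.factorial_mul_ascFactorial, Finsupp.add_apply]

theorem natCast_factorial_div_prod_factorial_ne_zero {R : Type*} [Semiring R] {n : ℕ}
    (hn : (n ! : R) ≠ 0) {γ : σ →₀ ℕ} (hγ : γ.degree ≤ n) :
    ((n ! / ∏ i, (γ i)! : ℕ) : R) ≠ 0 := by
  have prod_dvd : ∏ i, (γ i)! ∣ n ! := by
    rw [Finsupp.degree_eq_sum] at hγ
    exact (Nat.prod_factorial_dvd_factorial_sum _ _).trans (Nat.factorial_dvd_factorial hγ)
  exact ne_zero_of_dvd_ne_zero hn (Nat.cast_dvd_cast (Nat.div_dvd_of_dvd prod_dvd))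

end Combinatorics

section DifferentialOperators

theorem coeff_iterate_pderiv {R σ : Type*} [CommSemiring R] (i : σ) (m : ℕ) (γ : σ →₀ ℕ)
    (p : MvPolynomial σ R) :
    coeff γ ((pderiv i)^[m] p) =
      (γ i + 1).ascFactorial m * coeff (γ + Finsupp.single i m) p := by
  induction m generalizing p with
  | zero => simp
  | succ m ih =>
    rw [Function.iterate_succ_apply, ih, coeff_pderiv, add_assoc, ← Finsupp.single_add,
      Nat.ascFactorial_succ]
    simp only [Finsupp.add_apply, Finsupp.single_eq_same]
    push_cast
    ring

theorem coeff_foldr_iterate_pderiv {R σ : Type*} [CommSemiring R] (β : σ → ℕ)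
    (p : MvPolynomial σ R) {l : List σ} (hl : l.Nodup) (γ : σ →₀ ℕ) :
    coeff γ (l.foldr (fun i q => (pderiv i)^[β i] q) p) =
      (l.map fun i => (γ i + 1).ascFactorial (β i)).prod *
        coeff (γ + (l.map fun i => Finsupp.single i (β i)).sum) p := by
  induction l generalizing γ with
  | nil => simp
  | cons i l ih =>
    obtain ⟨hi, hl⟩ := List.nodup_cons.mp hl
    have eq_on_tail : ∀ j ∈ l, (γ + Finsupp.single i (β i)) j = γ j := fun j hj => by
      simp [Finsupp.single_eq_of_ne (ne_of_mem_of_not_mem hj hi)]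
    have map_tail : (l.map fun j => ((γ + Finsupp.single i (β i)) j + 1).ascFactorial (β j)) =
        l.map fun j => (γ j + 1).ascFactorial (β j) :=
      List.map_congr_left fun j hj => by rw [eq_on_tail j hj]
    rw [List.foldr_cons, coeff_iterate_pderiv, ih hl, map_tail, List.map_cons, List.prod_cons,
      List.map_cons, List.sum_cons, add_assoc, Nat.cast_mul, mul_assoc]

theorem coeff_diffOp {R : Type*} [CommRing R] {r : ℕ} (f p : MvPolynomial (Fin r) R)
    (γ : Fin r →₀ ℕ) :
    coeff γ (diffOp f p) = ∑ β ∈ f.support,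
      coeff β f * ((∏ i, (γ i + 1).ascFactorial (β i) : ℕ) * coeff (γ + β) p) := by
  rw [diffOp, coeff_sum]
  refine Finset.sum_congr rfl fun β _ => ?_
  rw [coeff_smul, smul_eq_mul, coeff_foldr_iterate_pderiv β p (List.nodup_finRange r),
    ← Fin.prod_univ_def, ← Fin.sum_univ_def, Finsupp.univ_sum_single]

end DifferentialOperators

theorem aeval_mem_of_isWeightedHomogeneous {R A M σ : Type*} [CommSemiring R] [CommSemiring A]
    [Algebra R A] [AddCommMonoid M] (𝒜 : M → Submodule R A) [SetLike.GradedMonoid 𝒜]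
    {w : σ → M} {a : σ → A} (ha : ∀ i, a i ∈ 𝒜 (w i)) {d : M} {f : MvPolynomial σ R}
    (hf : f.IsWeightedHomogeneous w d) : aeval a f ∈ 𝒜 d := by
  rw [aeval_def, eval₂_eq]
  refine Submodule.sum_mem _ fun γ hγ => ?_
  rw [← Algebra.smul_def, ← hf (mem_support_iff.mp hγ)]
  exact Submodule.smul_mem _ _ (SetLike.prod_pow_mem_graded 𝒜 w a γ fun i _ => ha i)

theorem aeval_monomial_mem {R A σ : Type*} [CommSemiring R] [CommSemiring A] [Algebra R A]
    (𝒜 : ℕ → Submodule R A) [SetLike.GradedMonoid 𝒜] {a : σ → A} (ha : ∀ i, a i ∈ 𝒜 1)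
    (γ : σ →₀ ℕ) (c : R) : aeval a (monomial γ c) ∈ 𝒜 γ.degree :=
  aeval_mem_of_isWeightedHomogeneous 𝒜 ha (isHomogeneous_monomial c rfl)

theorem aeval_mul_aeval_monomial_one {R A σ : Type*} [CommSemiring R] [CommSemiring A]
    [Algebra R A] (a : σ → A) (f : MvPolynomial σ R) (γ : σ →₀ ℕ) :
    aeval a f * aeval a (monomial γ (1 : R)) =
      ∑ β ∈ f.support, coeff β f • aeval a (monomial (γ + β) (1 : R)) := by
  conv_lhs => rw [← map_mul, f.as_sum, Finset.sum_mul, map_sum]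
  refine Finset.sum_congr rfl fun β _ => ?_
  rw [monomial_mul, mul_one, add_comm, ← map_smul, smul_monomial, smul_eq_mul, mul_one]

section DegreeMap

variable {ι R M : Type*} [DecidableEq ι] [CommSemiring R] [AddCommMonoid M] [Module R M]
  (ℳ : ι → Submodule R M) [DirectSum.Decomposition ℳ]

/-- The degree map `∫ : M → R` of a graded module: a linear form `ℓ` on the component of degree
`i`, extended by zero to the components of all other degrees. For a Poincaré duality algebra
with top degree `i`, the pairing `(x, y) ↦ ∫ x * y` is the duality pairing. -/
def degreeMap (i : ι) (ℓ : ℳ i →ₗ[R] R) : M →ₗ[R] R :=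
  ℓ ∘ₗ DirectSum.component R ι (fun j => ℳ j) i ∘ₗ (DirectSum.decomposeLinearEquiv ℳ).toLinearMap

theorem degreeMap_apply (i : ι) (ℓ : ℳ i →ₗ[R] R) (x : M) :
    degreeMap ℳ i ℓ x = ℓ (DirectSum.decompose ℳ x i) :=
  rfl

theorem degreeMap_of_mem_ne {i j : ι} (ℓ : ℳ i →ₗ[R] R) {x : M} (hx : x ∈ ℳ j) (hij : j ≠ i) :
    degreeMap ℳ i ℓ x = 0 := by
  rw [degreeMap_apply, Submodule.coe_eq_zero.mp (DirectSum.decompose_of_mem_ne ℳ hx hij), map_zero]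

end DegreeMap

theorem PoincareDuality.eq_zero_of_forall_degreeMap_mul_eq_zero {k A : Type*} [Field k]
    [CommRing A] [Algebra k A] {𝒜 : ℕ → Submodule k A} [GradedAlgebra 𝒜] {n : ℕ}
    (hPD : PoincareDuality 𝒜 n) (htop : ∀ i, n < i → 𝒜 i = ⊥) {ℓ : 𝒜 n →ₗ[k] k}
    (hℓ : Function.Injective ℓ) {x : A} (hx : ∀ y, degreeMap 𝒜 n ℓ (x * y) = 0) : x = 0 := by
  suffices component_eq_zero : ∀ i, (DirectSum.decompose 𝒜 x i : A) = 0 by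
    classical
    rw [← DirectSum.sum_support_decompose 𝒜 x]
    exact Finset.sum_eq_zero fun i _ => component_eq_zero i
  intro i
  have hxi : (DirectSum.decompose 𝒜 x i : A) ∈ 𝒜 i := SetLike.coe_mem _
  rcases lt_or_ge n i with hni | hin
  · exact (Submodule.eq_bot_iff _).mp (htop i hni) _ hxi
  · by_contra hne
    obtain ⟨y, hy, hxy⟩ := (hPD i hin).1 _ hxi hne
    have top_component : (DirectSum.decompose 𝒜 (x * y) n : A) = DirectSum.decompose 𝒜 x i * y := by
      conv_lhs => rw [← Nat.add_sub_cancel' hin]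
      exact DirectSum.coe_decompose_mul_add_of_right_mem 𝒜 hy
    have top_component_eq_zero : DirectSum.decompose 𝒜 (x * y) n = 0 :=
      (map_eq_zero_iff ℓ hℓ).mp (hx y)
    exact hxy (by rw [← top_component, top_component_eq_zero, ZeroMemClass.coe_zero])

section TopPowerPolynomial

variable {k A : Type*} [Field k] [CommRing A] [Algebra k A] {𝒜 : ℕ → Submodule k A}
  [GradedAlgebra 𝒜] {n r : ℕ} {a : Fin r → A}

theorem coeff_topPowerPoly_eq_degreeMap (ι : 𝒜 n ≃ₗ[k] k) (α : Fin r →₀ ℕ) :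
    coeff α (topPowerPoly 𝒜 n a ι) =
      degreeMap 𝒜 n ι (coeff α ((∑ i, X i * C (a i)) ^ n)) := by
  classical
  simp only [topPowerPoly, coeff_sum, coeff_smul, coeff_monomial, smul_eq_mul, mul_ite, mul_one,
    mul_zero, Finset.sum_ite_eq']
  split_ifs with hα
  · rfl
  · rw [notMem_support_iff.mp hα, map_zero]

theorem coeff_topPowerPoly (ha : ∀ i, a i ∈ 𝒜 1) (ι : 𝒜 n ≃ₗ[k] k) (α : Fin r →₀ ℕ) :
    coeff α (topPowerPoly 𝒜 n a ι) =
      α.multinomial * degreeMap 𝒜 n ι (aeval a (monomial α (1 : k))) := by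
  have linear_form : ∑ i, X i * C (a i) = ∑ i, a i • (X i : MvPolynomial (Fin r) A) :=
    Finset.sum_congr rfl fun i _ => by rw [smul_eq_C_mul, mul_comm]
  rw [coeff_topPowerPoly_eq_degreeMap, linear_form, coeff_linearCombination_X_pow_of_fintype]
  split_ifs with hα
  · rw [aeval_monomial, map_one, one_mul, ← nsmul_eq_mul, map_nsmul, nsmul_eq_mul]
  · rw [map_zero, degreeMap_of_mem_ne 𝒜 _ (aeval_monomial_mem 𝒜 ha α 1) hα, mul_zero]

/-- The quotient `n ! / ∏ i, (γ i)!` is exact for `γ.degree ≤ n`; for `γ.degree > n` both sides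
vanish for degree reasons. -/
theorem coeff_diffOp_topPowerPoly (ha : ∀ i, a i ∈ 𝒜 1) (ι : 𝒜 n ≃ₗ[k] k)
    (f : MvPolynomial (Fin r) k) (γ : Fin r →₀ ℕ) :
    coeff γ (diffOp f (topPowerPoly 𝒜 n a ι)) =
      (n ! / ∏ i, (γ i)! : ℕ) *
        degreeMap 𝒜 n ι (aeval a f * aeval a (monomial γ (1 : k))) := by
  rw [coeff_diffOp, aeval_mul_aeval_monomial_one, map_sum, Finset.mul_sum]
  refine Finset.sum_congr rfl fun β _ => ?_
  rw [coeff_topPowerPoly ha, map_smul, smul_eq_mul]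
  by_cases hn : (γ + β).degree = n
  · have exact_quotient := prod_ascFactorial_mul_multinomial_add γ β
    rw [hn] at exact_quotient
    rw [← exact_quotient, Nat.cast_mul]
    ring
  · rw [degreeMap_of_mem_ne 𝒜 _ (aeval_monomial_mem 𝒜 ha _ _) hn]
    simp only [mul_zero]

theorem diffOp_topPowerPoly_eq_zero_of_aeval_eq_zero (ha : ∀ i, a i ∈ 𝒜 1) (ι : 𝒜 n ≃ₗ[k] k)
    {f : MvPolynomial (Fin r) k} (hf : aeval a f = 0) :
    diffOp f (topPowerPoly 𝒜 n a ι) = 0 := by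
  ext γ
  rw [coeff_diffOp_topPowerPoly ha, hf, zero_mul, map_zero, mul_zero, coeff_zero]

theorem degreeMap_aeval_mul_aeval_eq_zero_of_diffOp_topPowerPoly_eq_zero
    (hn : (n ! : k) ≠ 0) (ha : ∀ i, a i ∈ 𝒜 1) {ι : 𝒜 n ≃ₗ[k] k}
    {f : MvPolynomial (Fin r) k} (hf : diffOp f (topPowerPoly 𝒜 n a ι) = 0)
    (g : MvPolynomial (Fin r) k) : degreeMap 𝒜 n ι (aeval a f * aeval a g) = 0 := by
  have on_monomials (γ : Fin r →₀ ℕ) :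
      degreeMap 𝒜 n ι (aeval a f * aeval a (monomial γ (1 : k))) = 0 := by
    rcases le_or_gt γ.degree n with hγ | hγ
    · have coeff_eq_zero := coeff_diffOp_topPowerPoly ha ι f γ
      rw [hf, coeff_zero, eq_comm, mul_eq_zero] at coeff_eq_zero
      exact coeff_eq_zero.resolve_left (natCast_factorial_div_prod_factorial_ne_zero hn hγ)
    · rw [aeval_mul_aeval_monomial_one, map_sum]
      refine Finset.sum_eq_zero fun β _ => ?_
      have degree_ne : (γ + β).degree ≠ n := by
        rw [map_add]
        lia
      rw [map_smul, degreeMap_of_mem_ne 𝒜 _ (aeval_monomial_mem 𝒜 ha _ _) degree_ne, smul_zero]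
  induction g using MvPolynomial.induction_on' with
  | monomial γ c =>
    have monomial_eq_smul : monomial γ c = c • monomial γ (1 : k) := by
      rw [smul_monomial, smul_eq_mul, mul_one]
    rw [monomial_eq_smul, map_smul, mul_smul_comm, map_smul, on_monomials, smul_zero]
  | add p q hp hq => rw [map_add, mul_add, map_add, hp, hq, add_zero]

end TopPowerPolynomial

theorem adjoin_range_coe_basis {R A ι : Type*} [CommSemiring R] [Semiring A] [Algebra R A]
    {M : Submodule R A} (b : Module.Basis ι R M) :
    Algebra.adjoin R (Set.range fun i => (b i : A)) = Algebra.adjoin R (M : Set A) := by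
  have span_range : Submodule.span R (Set.range fun i => (b i : A)) = M := by
    rw [show (fun i => (b i : A)) = M.subtype ∘ b from rfl, Set.range_comp, Submodule.span_image,
      b.span_eq, Submodule.map_top, Submodule.range_subtype]
  rw [← Algebra.adjoin_span, span_range]

theorem kernel_of_evaluation_eq_annihilator_of_volume_polynomial_general
    {k A : Type*} [Field k] [CommRing A] [Algebra k A] (𝒜 : ℕ → Submodule k A) (n : ℕ)
    [GradedAlgebra 𝒜] (hn : (n ! : k) ≠ 0) (htop : ∀ i, n < i → 𝒜 i = ⊥)
    (hPD : PoincareDuality 𝒜 n) {r : ℕ} (a : Fin r → A) (ha : ∀ i, a i ∈ 𝒜 1)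
    (hgen : Algebra.adjoin k (Set.range a) = ⊤) (ι : 𝒜 n ≃ₗ[k] k) :
    (∀ f : MvPolynomial (Fin r) k,
        aeval a f = 0 ↔ diffOp f (topPowerPoly 𝒜 n a ι) = 0) ∧
    Function.Surjective (aeval a : MvPolynomial (Fin r) k → A) ∧
    (∀ (d : ℕ) (f : MvPolynomial (Fin r) k), f.IsHomogeneous d → aeval a f ∈ 𝒜 d) := by
  have aeval_surjective : Function.Surjective (aeval a : MvPolynomial (Fin r) k → A) := by
    rwa [Algebra.adjoin_range_eq_range_aeval, AlgHom.range_eq_top] at hgen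
  refine ⟨fun f => ⟨diffOp_topPowerPoly_eq_zero_of_aeval_eq_zero ha ι, fun hf => ?_⟩,
    aeval_surjective, fun _ _ hf => aeval_mem_of_isWeightedHomogeneous 𝒜 ha hf⟩
  refine hPD.eq_zero_of_forall_degreeMap_mul_eq_zero htop ι.injective
    (aeval_surjective.forall.mpr fun g => ?_)
  exact degreeMap_aeval_mul_aeval_eq_zero_of_diffOp_topPowerPoly_eq_zero hn ha hf g

/-- A finite-dimensional graded commutative algebra `A` over a field `k` of
characteristic zero, generated in degree one, with `A^0 ≅ A^n ≅ k` and Poincaré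
duality, is determined by its top power polynomial `P`: the kernel of the evaluation
map `Φ : k[t_1, …, t_r] → A`, `t_i ↦ a_i` (for a basis `a_1, …, a_r` of `A^1`), is
exactly the ideal of polynomials annihilating `P` as differential operators; since
`Φ` is surjective and maps degree-`d` homogeneous polynomials into `A^d`, it induces
an isomorphism of graded algebras `A ≅ k[t_1, …, t_r]/I`. -/
theorem kernel_of_evaluation_eq_annihilator_of_volume_polynomial
    {k A : Type*} [Field k] [CharZero k] [CommRing A] [Algebra k A]
    [FiniteDimensional k A] (𝒜 : ℕ → Submodule k A) (n : ℕ) [GradedAlgebra 𝒜]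
    (htop : ∀ i, n < i → 𝒜 i = ⊥)
    (h0 : Module.finrank k (𝒜 0) = 1)
    (hgen : Algebra.adjoin k ((𝒜 1 : Submodule k A) : Set A) = ⊤)
    (hPD : PoincareDuality 𝒜 n)
    {r : ℕ} (b : Module.Basis (Fin r) k (𝒜 1)) (ι : (𝒜 n) ≃ₗ[k] k) :
    (∀ f : MvPolynomial (Fin r) k,
        MvPolynomial.aeval (fun i => (b i : A)) f = 0 ↔
          diffOp f (topPowerPoly 𝒜 n (fun i => (b i : A)) ι) = 0) ∧
    Function.Surjective
      (MvPolynomial.aeval (fun i => (b i : A)) : MvPolynomial (Fin r) k → A) ∧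
    (∀ (d : ℕ) (f : MvPolynomial (Fin r) k), f.IsHomogeneous d →
        MvPolynomial.aeval (fun i => (b i : A)) f ∈ 𝒜 d) := by
  exact kernel_of_evaluation_eq_annihilator_of_volume_polynomial_general 𝒜 n
    (Nat.cast_ne_zero.mpr n.factorial_ne_zero) htop hPD _ (fun i => (b i).2)
    ((adjoin_range_coe_basis b).trans hgen) ι
end

section
/- Let k be a field of characteristic zero and let A = ⊕_{i=0}^n A^i and B = ⊕_{i=0}^n B^i be graded commutative k-algebras, finite dimensional as k-vector spaces, such that: (1) A^0 ≅ A^n ≅ B^0 ≅ B^n ≅ k; (2) A and B are each generated as k-algebras by their degree-one pieces; (3) A has Poincaré duality; (4) there is a k-linear isomorphism φ: A^1 → B^1 such that, for fixed k-linear isomorphisms ι_A: A^n → k and ι_B: B^n → k, one has ι_A(a_1 ⋯ a_n) = ι_B(φ(a_1) ⋯ φ(a_n)) for all a_1, ..., a_n ∈ A^1. Let I_B be the ideal of B generated by all homogeneous y ∈ B with y · B^{n - deg(y)} = 0, and q: B → B/I_B the quotient map, so B/I_B is the Gorenstein quotient Gor(B). Then there is an isomorphism of graded k-algebras φ̃: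 A → B/I_B whose restriction to A^1 equals q ∘ φ. -/
/-- The ideal generated by all homogeneous elements `y` (say of degree `i`)
with `y · B^{n - i} = 0`; the quotient by it is the Gorenstein quotient `Gor(B)`. -/
def gorIdeal {k B : Type*} [Field k] [CommRing B] [Algebra k B]
    (ℬ : ℕ → Submodule k B) (n : ℕ) : Ideal B :=
  Ideal.span {y | ∃ i ≤ n, y ∈ ℬ i ∧ ∀ z ∈ ℬ (n - i), y * z = 0}

/-!
Pairing with the top degree detects `gorIdeal`: an element `y` lies in it exactly when every
multiple of `y` has vanishing degree-`n` component. So if a graded algebra `R` surjects onto `A`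
and `B`, the preimages of the two Gorenstein ideals depend only on which elements of `R` of
degree `n` vanish in `A` and in `B`. For `R` the polynomial ring on a set of degree-one
generators, the elements of degree `n` are combinations of products of `n` generators, so the
hypothesis on top products makes the two preimages agree. Poincaré duality says that
`gorIdeal 𝒜 n = ⊥`, whence `R → A` and `R → Gor(B)` are surjections with the same kernel.
-/

open DirectSum MvPolynomial

theorem exists_algEquiv_of_ker_eq {k R A C : Type*} [CommRing k] [CommRing R] [CommRing A]
    [CommRing C] [Algebra k R] [Algebra k A] [Algebra k C] {f : R →ₐ[k] A} {g : R →ₐ[k] C}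
    (hf : Function.Surjective f) (hg : Function.Surjective g)
    (hker : RingHom.ker f = RingHom.ker g) :
    ∃ e : A ≃ₐ[k] C, ∀ r, e (f r) = g r := by
  let lift := AlgHom.liftOfSurjective f hf g hker.le
  have lift_apply (r : R) : lift (f r) = g r := AlgHom.liftOfSurjective_apply f hf g hker.le r
  have lift_injective : Function.Injective lift := by
    rw [injective_iff_map_eq_zero, hf.forall]
    intro r hr
    rwa [lift_apply, ← RingHom.mem_ker, ← hker] at hr
  have lift_surjective : Function.Surjective lift :=
    AlgHom.liftOfSurjective_surjective f hf g hker.le hg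
  exact ⟨AlgEquiv.ofBijective lift ⟨lift_injective, lift_surjective⟩, lift_apply⟩

theorem map_gradedAlgHom_eq_of_surjective {k R A ι : Type*} [CommSemiring k] [Semiring R]
    [Semiring A] [Algebra k R] [Algebra k A] [DecidableEq ι] [AddMonoid ι]
    {𝓡 : ι → Submodule k R} {𝒜 : ι → Submodule k A} [GradedAlgebra 𝓡] [GradedAlgebra 𝒜]
    {f : 𝓡 →ₐᵍ[k] 𝒜} (hf : Function.Surjective f) (i : ι) :
    (𝓡 i).map f.toAlgHom.toLinearMap = 𝒜 i := by
  refine le_antisymm (Submodule.map_le_iff_le_comap.2 fun r hr => f.map_mem hr) fun x hx => ?_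
  obtain ⟨r, rfl⟩ := hf x
  refine ⟨decompose 𝓡 r i, SetLike.coe_mem _, ?_⟩
  exact (map_directSumDecompose 𝓡 𝒜 f).trans (decompose_of_mem_same 𝒜 hx)

section PolynomialRing

attribute [local instance] MvPolynomial.gradedAlgebra

theorem homogeneousSubmodule_eq_span_prod_X (σ k : Type*) [CommSemiring k] (n : ℕ) :
    homogeneousSubmodule σ k n =
      Submodule.span k (Set.range fun s : Fin n → σ => ∏ i, (X (s i) : MvPolynomial σ k)) := by
  rw [← homogeneousSubmodule_one_pow, homogeneousSubmodule_one_eq_span_X, Submodule.span_pow]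
  congr 1
  ext p
  simp only [Set.mem_pow_iff_prod, Set.mem_range]
  constructor
  · rintro ⟨factor, hfactor, rfl⟩
    choose s hs using hfactor
    exact ⟨s, Finset.prod_congr rfl fun i _ => hs i⟩
  · rintro ⟨s, rfl⟩
    exact ⟨fun i => X (s i), fun i => ⟨s i, rfl⟩, rfl⟩

variable {k A σ : Type*} [CommSemiring k] [CommSemiring A] [Algebra k A]
  {𝒜 : ℕ → Submodule k A} [GradedAlgebra 𝒜]

theorem prod_degree_one_mem {n : ℕ} (a : Fin n → 𝒜 1) : ∏ i, (a i : A) ∈ 𝒜 n := by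
  simpa using SetLike.prod_mem_graded (F := Finset.univ) 𝒜 (fun _ => 1)
    (fun i => (a i : A)) fun i _ => (a i).2

/-- Evaluation of polynomials at degree-one elements `a s` of a graded algebra, as a homomorphism of
graded algebras from the polynomial ring graded by total degree. -/
noncomputable def gradedAeval (a : σ → 𝒜 1) : homogeneousSubmodule σ k →ₐᵍ[k] 𝒜 where
  toAlgHom := aeval fun s => (a s : A)
  map_mem {n} := by
    change homogeneousSubmodule σ k n ≤ (𝒜 n).comap (aeval fun s => (a s : A)).toLinearMap
    rw [homogeneousSubmodule_eq_span_prod_X, Submodule.span_le]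
    rintro _ ⟨s, rfl⟩
    simpa using prod_degree_one_mem fun i => a (s i)

theorem gradedAeval_surjective {a : σ → 𝒜 1}
    (ha : Algebra.adjoin k (Set.range ((↑) ∘ a : σ → A)) = ⊤) :
    Function.Surjective (gradedAeval a) := by
  rwa [Algebra.adjoin_range_eq_range_aeval, AlgHom.range_eq_top] at ha

variable {B M : Type*} [CommSemiring B] [Algebra k B] {ℬ : ℕ → Submodule k B} [GradedAlgebra ℬ]
  [AddCommMonoid M] [Module k M] {n : ℕ} {ιA : 𝒜 n →ₗ[k] M} {ιB : ℬ n →ₗ[k] M}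
  {a : σ → 𝒜 1} {b : σ → ℬ 1}

theorem gradedAeval_eq_of_prod_eq
    (hcompat : ∀ s : Fin n → σ, ιA ⟨∏ i, (a (s i) : A), prod_degree_one_mem _⟩ =
      ιB ⟨∏ i, (b (s i) : B), prod_degree_one_mem _⟩)
    {p : MvPolynomial σ k} (hp : p ∈ homogeneousSubmodule σ k n) :
    ιA ⟨gradedAeval a p, Graded.map_mem _ hp⟩ = ιB ⟨gradedAeval b p, Graded.map_mem _ hp⟩ := by
  let evalA : homogeneousSubmodule σ k n →ₗ[k] 𝒜 n :=
    (gradedAeval a).toAlgHom.toLinearMap.restrict fun _ => Graded.map_mem (gradedAeval a)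
  let evalB : homogeneousSubmodule σ k n →ₗ[k] ℬ n :=
    (gradedAeval b).toAlgHom.toLinearMap.restrict fun _ => Graded.map_mem (gradedAeval b)
  suffices ιA ∘ₗ evalA = ιB ∘ₗ evalB from LinearMap.congr_fun this ⟨p, hp⟩
  rw [Submodule.linearMap_eq_iff_of_eq_span _ _ (homogeneousSubmodule_eq_span_prod_X σ k n)]
  rintro ⟨_, s, rfl⟩
  simpa [evalA, evalB, gradedAeval, LinearMap.restrict_apply] using hcompat s

theorem gradedAeval_eq_zero_iff_of_prod_eq (hιA : Function.Injective ιA)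
    (hιB : Function.Injective ιB)
    (hcompat : ∀ s : Fin n → σ, ιA ⟨∏ i, (a (s i) : A), prod_degree_one_mem _⟩ =
      ιB ⟨∏ i, (b (s i) : B), prod_degree_one_mem _⟩)
    (p : MvPolynomial σ k) (hp : p ∈ homogeneousSubmodule σ k n) :
    gradedAeval a p = 0 ↔ gradedAeval b p = 0 := by
  rw [← Submodule.mk_eq_zero _ (Graded.map_mem (gradedAeval a) hp),
    ← Submodule.mk_eq_zero _ (Graded.map_mem (gradedAeval b) hp),
    ← map_eq_zero_iff ιA hιA, ← map_eq_zero_iff ιB hιB, gradedAeval_eq_of_prod_eq hcompat hp]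

end PolynomialRing

section GorensteinIdeal

variable {k A B R : Type*} [Field k] [CommRing A] [Algebra k A] [CommRing B] [Algebra k B]
  [CommRing R] [Algebra k R] {𝒜 : ℕ → Submodule k A} {ℬ : ℕ → Submodule k B}
  {𝓡 : ℕ → Submodule k R} {n : ℕ}

theorem PoincareDuality.gorIdeal_eq_bot (hPD : PoincareDuality 𝒜 n) : gorIdeal 𝒜 n = ⊥ := by
  refine Ideal.span_eq_bot.2 ?_
  rintro y ⟨i, hi, hy, hann⟩
  by_contra hy0
  obtain ⟨z, hz, hyz⟩ := (hPD i hi).1 y hy hy0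
  exact hyz (hann z hz)

variable [GradedAlgebra 𝒜] [GradedAlgebra ℬ] [GradedAlgebra 𝓡]

theorem decompose_mul_eq_zero_of_mem_gorIdeal {y : A} (hy : y ∈ gorIdeal 𝒜 n) (x : A) :
    (decompose 𝒜 (y * x) n : A) = 0 := by
  induction hy using Submodule.span_induction generalizing x with
  | mem y hy =>
    obtain ⟨i, hi, hyi, hann⟩ := hy
    rw [coe_decompose_mul_of_left_mem_of_le 𝒜 hyi hi]
    exact hann _ (SetLike.coe_mem _)
  | zero => simp
  | add y z _ _ hy hz =>
    rw [add_mul, decompose_add, DirectSum.add_apply, Submodule.coe_add, hy, hz, add_zero]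
  | smul c y _ hy => rw [smul_eq_mul, mul_comm c, mul_assoc, hy]

theorem mem_gorIdeal_of_forall_decompose_mul_eq_zero (htop : ∀ i, n < i → 𝒜 i = ⊥) {y : A}
    (hy : ∀ x, (decompose 𝒜 (y * x) n : A) = 0) : y ∈ gorIdeal 𝒜 n := by
  classical
  rw [← sum_support_decompose 𝒜 y]
  refine Ideal.sum_mem _ fun i _ => ?_
  rcases le_or_gt i n with hi | hi
  · refine Ideal.subset_span ⟨i, hi, SetLike.coe_mem _, fun z hz => ?_⟩
    have hyz := coe_decompose_mul_of_right_mem_of_le 𝒜 (a := y) hz (Nat.sub_le n i)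
    rwa [hy, Nat.sub_sub_self hi, eq_comm] at hyz
  · have hyi : (decompose 𝒜 y i : A) ∈ (⊥ : Submodule k A) := htop i hi ▸ SetLike.coe_mem _
    rw [(Submodule.mem_bot k).1 hyi]
    exact Ideal.zero_mem _

theorem mem_gorIdeal_iff (htop : ∀ i, n < i → 𝒜 i = ⊥) {y : A} :
    y ∈ gorIdeal 𝒜 n ↔ ∀ x, (decompose 𝒜 (y * x) n : A) = 0 :=
  ⟨decompose_mul_eq_zero_of_mem_gorIdeal, mem_gorIdeal_of_forall_decompose_mul_eq_zero htop⟩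

theorem map_mem_gorIdeal_iff (htop : ∀ i, n < i → 𝒜 i = ⊥) {f : 𝓡 →ₐᵍ[k] 𝒜}
    (hf : Function.Surjective f) {p : R} :
    f p ∈ gorIdeal 𝒜 n ↔ ∀ r, f (decompose 𝓡 (p * r) n) = 0 := by
  simp only [mem_gorIdeal_iff htop, hf.forall, ← map_mul, map_directSumDecompose 𝓡 𝒜 f]

theorem map_mem_gorIdeal_iff_map_mem_gorIdeal (htopA : ∀ i, n < i → 𝒜 i = ⊥)
    (htopB : ∀ i, n < i → ℬ i = ⊥) {f : 𝓡 →ₐᵍ[k] 𝒜} {g : 𝓡 →ₐᵍ[k] ℬ}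
    (hf : Function.Surjective f) (hg : Function.Surjective g)
    (hfg : ∀ r ∈ 𝓡 n, f r = 0 ↔ g r = 0) {p : R} :
    f p ∈ gorIdeal 𝒜 n ↔ g p ∈ gorIdeal ℬ n := by
  rw [map_mem_gorIdeal_iff htopA hf, map_mem_gorIdeal_iff htopB hg]
  exact forall_congr' fun r => hfg _ (SetLike.coe_mem _)

theorem exists_algEquiv_quotient_gorIdeal (htopA : ∀ i, n < i → 𝒜 i = ⊥)
    (htopB : ∀ i, n < i → ℬ i = ⊥) (hPD : PoincareDuality 𝒜 n) {f : 𝓡 →ₐᵍ[k] 𝒜}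
    {g : 𝓡 →ₐᵍ[k] ℬ} (hf : Function.Surjective f) (hg : Function.Surjective g)
    (hfg : ∀ r ∈ 𝓡 n, f r = 0 ↔ g r = 0) :
    ∃ e : A ≃ₐ[k] (B ⧸ gorIdeal ℬ n),
      (∀ r, e (f r) = Ideal.Quotient.mk (gorIdeal ℬ n) (g r)) ∧
      ∀ i, (𝒜 i).map e.toLinearMap =
        (ℬ i).map (Ideal.Quotient.mkₐ k (gorIdeal ℬ n)).toLinearMap := by
  let q := Ideal.Quotient.mkₐ k (gorIdeal ℬ n)
  have hker : RingHom.ker f.toAlgHom = RingHom.ker (q.comp g.toAlgHom) := by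
    ext p
    calc f p = 0 ↔ f p ∈ gorIdeal 𝒜 n := by rw [hPD.gorIdeal_eq_bot, Ideal.mem_bot]
      _ ↔ g p ∈ gorIdeal ℬ n := map_mem_gorIdeal_iff_map_mem_gorIdeal htopA htopB hf hg hfg
      _ ↔ q (g p) = 0 := Ideal.Quotient.eq_zero_iff_mem.symm
  have hqg : Function.Surjective (q.comp g.toAlgHom) :=
    (Ideal.Quotient.mkₐ_surjective k _).comp hg
  obtain ⟨e, he⟩ := exists_algEquiv_of_ker_eq hf hqg hker
  refine ⟨e, he, fun i => ?_⟩
  rw [← map_gradedAlgHom_eq_of_surjective hf, ← map_gradedAlgHom_eq_of_surjective hg,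
    ← Submodule.map_comp, ← Submodule.map_comp]
  congr 1
  exact LinearMap.ext he

end GorensteinIdeal

attribute [local instance] MvPolynomial.gradedAlgebra in
theorem iso_with_gorenstein_quotient_general {k A B M σ : Type*} [Field k] [CommRing A]
    [Algebra k A] [CommRing B] [Algebra k B] [AddCommMonoid M] [Module k M]
    {𝒜 : ℕ → Submodule k A} {ℬ : ℕ → Submodule k B} {n : ℕ} [GradedAlgebra 𝒜] [GradedAlgebra ℬ]
    (htopA : ∀ i, n < i → 𝒜 i = ⊥) (htopB : ∀ i, n < i → ℬ i = ⊥) (hPD : PoincareDuality 𝒜 n)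
    {ιA : 𝒜 n →ₗ[k] M} {ιB : ℬ n →ₗ[k] M} (hιA : Function.Injective ιA)
    (hιB : Function.Injective ιB) {a : σ → 𝒜 1} {b : σ → ℬ 1}
    (hgenA : Algebra.adjoin k (Set.range ((↑) ∘ a : σ → A)) = ⊤)
    (hgenB : Algebra.adjoin k (Set.range ((↑) ∘ b : σ → B)) = ⊤)
    (hcompat : ∀ s : Fin n → σ, ιA ⟨∏ i, (a (s i) : A), prod_degree_one_mem _⟩ =
      ιB ⟨∏ i, (b (s i) : B), prod_degree_one_mem _⟩) :
    ∃ e : A ≃ₐ[k] (B ⧸ gorIdeal ℬ n),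
      (∀ s, e (a s : A) = Ideal.Quotient.mk (gorIdeal ℬ n) (b s : B)) ∧
      ∀ i, (𝒜 i).map e.toLinearMap =
        (ℬ i).map (Ideal.Quotient.mkₐ k (gorIdeal ℬ n)).toLinearMap := by
  obtain ⟨e, he, hgraded⟩ := exists_algEquiv_quotient_gorIdeal htopA htopB hPD
    (gradedAeval_surjective hgenA) (gradedAeval_surjective hgenB)
    (gradedAeval_eq_zero_iff_of_prod_eq hιA hιB hcompat)
  exact ⟨e, fun s => by simpa [gradedAeval] using he (X s), hgraded⟩

/-- If `A`, `B` are finite-dimensional graded commutative algebras over a field `k` of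
characteristic zero, both generated in degree one with degree-`0` and degree-`n`
pieces isomorphic to `k`, `A` has Poincaré duality, and there is a linear isomorphism
`φ : A^1 → B^1` matching all top products of degree-one elements, then `φ` extends to
an isomorphism of graded algebras between `A` and the Gorenstein quotient `Gor(B)`. -/
theorem iso_with_gorenstein_quotient
    {k A B : Type*} [Field k] [CharZero k]
    [CommRing A] [Algebra k A] [FiniteDimensional k A]
    [CommRing B] [Algebra k B] [FiniteDimensional k B]
    (𝒜 : ℕ → Submodule k A) (ℬ : ℕ → Submodule k B) (n : ℕ)
    [GradedAlgebra 𝒜] [GradedAlgebra ℬ]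
    (htopA : ∀ i, n < i → 𝒜 i = ⊥) (htopB : ∀ i, n < i → ℬ i = ⊥)
    (h0A : Module.finrank k (𝒜 0) = 1) (h0B : Module.finrank k (ℬ 0) = 1)
    (hgenA : Algebra.adjoin k ((𝒜 1 : Submodule k A) : Set A) = ⊤)
    (hgenB : Algebra.adjoin k ((ℬ 1 : Submodule k B) : Set B) = ⊤)
    (hPD : PoincareDuality 𝒜 n)
    (ιA : (𝒜 n) ≃ₗ[k] k) (ιB : (ℬ n) ≃ₗ[k] k)
    (φ : (𝒜 1) ≃ₗ[k] (ℬ 1))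
    (hcompat : ∀ (a : Fin n → (𝒜 1))
        (hA : (∏ i, ((a i : A))) ∈ 𝒜 n) (hB : (∏ i, ((φ (a i) : B))) ∈ ℬ n),
        ιA ⟨∏ i, ((a i : A)), hA⟩ = ιB ⟨∏ i, ((φ (a i) : B)), hB⟩) :
    ∃ e : A ≃ₐ[k] (B ⧸ gorIdeal ℬ n),
      (∀ x : (𝒜 1), e (x : A) = Ideal.Quotient.mk (gorIdeal ℬ n) ((φ x : B))) ∧
      (∀ i ≤ n, ∀ x ∈ 𝒜 i,
        e x ∈ (ℬ i).map (Ideal.Quotient.mkₐ k (gorIdeal ℬ n)).toLinearMap) := by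
  obtain ⟨e, he, hgraded⟩ := iso_with_gorenstein_quotient_general htopA htopB hPD ιA.injective
    ιB.injective (a := id) (b := φ) (by simpa) (by simpa) fun a => hcompat a _ _
  exact ⟨e, he, fun i _ x hx => (hgraded i).le (Submodule.mem_map_of_mem hx)⟩
end
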